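/- Let h = ⊕_{i=1}^{l} a_i J ⊕ (0) ∈ so(2l+1,ℂ) be the block-diagonal skew-symmetric matrix with 2×2 blocks a_i J, J = [[0,1],[-1,0]], and a final 1×1 zero block. Let X ∈ so(2l+2,ℂ) have h as its top-left (2l+1)×(2l+1) block, last column (z_{11}, z_{12}, ..., z_{l1}, z_{l2}, z_{l+1}, 0)ᵀ and last row its negative transpose. Then the characteristic polynomial of X equals ∑_{i=1}^{l} (z_{i1}² + z_{i2}²) t² ∏_{j≠i}(t² + a_j²) + z_{l+1}² ∏_{i=1}^{l}(t² + a_i²) + t² ∏_{i=1}^{l}(t² + a_i²). -/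

import Mathlib

open Matrix Polynomial

/-- The bordered skew-symmetric matrix `X ∈ so(2l+2,ℂ)` whose top-left
`(2l+1)×(2l+1)` block is `h = ⊕ᵢ aᵢ·J ⊕ (0)` (`J = [[0,1],[-1,0]]`), whose last
column is `(z_{11}, z_{12}, …, z_{l1}, z_{l2}, z_{l+1}, 0)ᵀ` (encoded by
`w : Fin (2l+1) → ℂ`, `w(2i) = z_{i+1,1}`, `w(2i+1) = z_{i+1,2}`,
`w(2l) = z_{l+1}`), and whose last row is the negative transpose. -/
def XD (l : ℕ) (a : Fin l → ℂ) (w : Fin (2 * l + 1) → ℂ) :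
    Matrix (Fin (2 * l + 2)) (Fin (2 * l + 2)) ℂ :=
  Matrix.of fun p q =>
    if h1 : (q : ℕ) = (p : ℕ) + 1 ∧ (p : ℕ) % 2 = 0 ∧ (p : ℕ) < 2 * l then
      a ⟨(p : ℕ) / 2, by omega⟩
    else if h2 : (p : ℕ) = (q : ℕ) + 1 ∧ (q : ℕ) % 2 = 0 ∧ (q : ℕ) < 2 * l then
      -a ⟨(q : ℕ) / 2, by omega⟩
    else if h3 : (q : ℕ) = 2 * l + 1 ∧ (p : ℕ) < 2 * l + 1 then w ⟨(p : ℕ), by omega⟩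
    else if h4 : (p : ℕ) = 2 * l + 1 ∧ (q : ℕ) < 2 * l + 1 then -w ⟨(q : ℕ), by omega⟩
    else 0

/-- Splits `Fin (2 * l + 2)` into the `l` consecutive pairs and the last two indices. -/
def pairsSumEquiv (l : ℕ) : (Fin 2 × Fin l) ⊕ Fin 2 ≃ Fin (2 * l + 2) :=
  ((Equiv.sumCongr ((Equiv.prodComm _ _).trans finProdFinEquiv) (Equiv.refl _)).trans
    finSumFinEquiv).trans (finCongr (by omega))

lemma pairsSumEquiv_inl_val (l : ℕ) (k : Fin 2) (i : Fin l) :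
    (pairsSumEquiv l (Sum.inl (k, i)) : ℕ) = k + 2 * i := by
  simp [pairsSumEquiv]

lemma pairsSumEquiv_inr_val (l : ℕ) (k : Fin 2) :
    (pairsSumEquiv l (Sum.inr k) : ℕ) = 2 * l + k := by
  simp [pairsSumEquiv, mul_comm]

lemma scalar_sub_XD_submatrix (l : ℕ) (a : Fin l → ℂ) (w : Fin (2 * l + 1) → ℂ) (t : ℂ) :
    (scalar _ t - XD l a w).submatrix (pairsSumEquiv l) (pairsSumEquiv l) =
      fromBlocks (blockDiagonal fun i => !![t, -a i; a i, t])
        (of fun p k => ![0, -w ⟨p.1 + 2 * p.2, by omega⟩] k)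
        (of fun k p => ![0, w ⟨p.1 + 2 * p.2, by omega⟩] k)
        !![t, -w (Fin.last (2 * l)); w (Fin.last (2 * l)), t] := by
  ext p q
  have hinj : ∀ p q, pairsSumEquiv l p = pairsSumEquiv l q ↔ p = q :=
    fun p q => (pairsSumEquiv l).injective.eq_iff
  rcases p with ⟨k, i⟩ | k <;> rcases q with ⟨m, j⟩ | m
  · have hi := i.isLt
    have hj := j.isLt
    simp only [submatrix_apply, Matrix.sub_apply, scalar_apply, diagonal_apply, hinj, XD, of_apply,
      pairsSumEquiv_inl_val, fromBlocks_apply₁₁, blockDiagonal_apply, Sum.inl.injEq, Prod.mk.injEq]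
    by_cases hij : i = j
    · subst hij
      fin_cases k <;> fin_cases m <;> simp <;> grind
    · have hij' : (i : ℕ) ≠ j := fun h => hij (Fin.ext h)
      have hk := k.isLt
      have hm := m.isLt
      rw [dif_neg (by omega), dif_neg (by omega), dif_neg (by omega), dif_neg (by omega)]
      simp [hij]
  · have hi := i.isLt
    simp only [submatrix_apply, Matrix.sub_apply, scalar_apply, diagonal_apply, hinj, XD, of_apply,
      pairsSumEquiv_inl_val, pairsSumEquiv_inr_val, fromBlocks_apply₁₂]
    fin_cases k <;> fin_cases m <;> simp <;> grind
  · have hj := j.isLt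
    simp only [submatrix_apply, Matrix.sub_apply, scalar_apply, diagonal_apply, hinj, XD, of_apply,
      pairsSumEquiv_inl_val, pairsSumEquiv_inr_val, fromBlocks_apply₂₁]
    fin_cases k <;> fin_cases m <;> simp <;> grind
  · simp only [submatrix_apply, Matrix.sub_apply, scalar_apply, diagonal_apply, hinj, XD, of_apply,
      pairsSumEquiv_inr_val, fromBlocks_apply₂₂]
    fin_cases k <;> fin_cases m <;> simp [Fin.last]

lemma det_scalar_sub_XD (l : ℕ) (a : Fin l → ℂ) (w : Fin (2 * l + 1) → ℂ) (t : ℂ)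
    (ht : ∀ i, t ^ 2 + a i ^ 2 ≠ 0) :
    (scalar _ t - XD l a w).det =
      (∏ i, (t ^ 2 + a i ^ 2)) * (t ^ 2 + w (Fin.last (2 * l)) ^ 2 +
        ∑ i : Fin l, (w ⟨2 * i, by omega⟩ ^ 2 + w ⟨2 * i + 1, by omega⟩ ^ 2) * t ^ 2 /
          (t ^ 2 + a i ^ 2)) := by
  have hmul : (blockDiagonal fun i => !![t, -a i; a i, t]) *
      (blockDiagonal fun i => (t ^ 2 + a i ^ 2)⁻¹ • !![t, a i; -a i, t]) = 1 := by
    rw [← blockDiagonal_mul, ← blockDiagonal_one]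
    congr 1
    funext i
    have := ht i
    ext k m
    fin_cases k <;> fin_cases m <;> simp [Matrix.mul_apply, Fin.sum_univ_two] <;>
      field_simp <;> ring
  let := invertibleOfRightInverse _ _ hmul
  rw [← det_submatrix_equiv_self (pairsSumEquiv l), scalar_sub_XD_submatrix, det_fromBlocks₁₁,
    det_blockDiagonal, invOf_eq_right_inv hmul, det_fin_two]
  simp only [det_fin_two_of]
  congr 1
  · exact Finset.prod_congr rfl fun i _ => by ring
  · simp [Matrix.mul_apply, Fintype.sum_prod_type, Fin.sum_univ_two, blockDiagonal_apply,
      add_comm 1]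
    rw [← neg_add, ← Finset.sum_add_distrib, sub_neg_eq_add, mul_add, Finset.mul_sum, ← sq, ← sq,
      add_right_comm]
    congr 1
    exact Finset.sum_congr rfl fun i _ => by ring

/-- The characteristic polynomial of the bordered matrix `X ∈ so(2l+2,ℂ)` is
`∑ᵢ (z_{i1}² + z_{i2}²) t² ∏_{j≠i}(t² + a_j²) + z_{l+1}² ∏ᵢ(t² + a_i²)
  + t² ∏ᵢ(t² + a_i²)`. -/
theorem XD_charpoly (l : ℕ) (a : Fin l → ℂ) (w : Fin (2 * l + 1) → ℂ) :
    (XD l a w).charpoly =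
      (∑ i : Fin l,
        C (w ⟨2 * (i : ℕ), by have := i.isLt; omega⟩ ^ 2 +
            w ⟨2 * (i : ℕ) + 1, by have := i.isLt; omega⟩ ^ 2) * X ^ 2 *
          ∏ j ∈ Finset.univ.erase i, (X ^ 2 + C (a j) ^ 2)) +
        C (w ⟨2 * l, by omega⟩) ^ 2 * ∏ i : Fin l, (X ^ 2 + C (a i) ^ 2) +
        X ^ 2 * ∏ i : Fin l, (X ^ 2 + C (a i) ^ 2) := by
  have hQ : (∏ i : Fin l, (X ^ 2 + C (a i) ^ 2) : ℂ[X]) ≠ 0 :=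
    Finset.prod_ne_zero_iff.mpr fun i _ => by
      rw [← C_pow]
      exact X_pow_add_C_ne_zero two_pos _
  refine mul_right_cancel₀ hQ (Polynomial.funext fun t => ?_)
  by_cases ht : ∀ i, t ^ 2 + a i ^ 2 ≠ 0
  · have herase (i : Fin l) : ∏ j ∈ Finset.univ.erase i, (t ^ 2 + a j ^ 2) =
        (∏ j, (t ^ 2 + a j ^ 2)) / (t ^ 2 + a i ^ 2) := by
      rw [eq_div_iff (ht i), Finset.prod_erase_mul _ _ (Finset.mem_univ i)]
    rw [eval_mul, eval_mul, eval_charpoly, det_scalar_sub_XD l a w t ht, Fin.last]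
    simp only [eval_add, eval_mul, eval_finsetSum, eval_prod, eval_pow, eval_X, eval_C, herase,
      mul_add, Finset.mul_sum]
    rw [Finset.sum_congr rfl fun i _ => mul_div_left_comm _ _ _]
    ring
  · push Not at ht
    obtain ⟨i, hi⟩ := ht
    have hz : eval t (∏ i : Fin l, (X ^ 2 + C (a i) ^ 2)) = 0 := by
      rw [eval_prod]
      exact Finset.prod_eq_zero (Finset.mem_univ i) (by simpa using hi)
    rw [eval_mul, eval_mul, hz, mul_zero, mul_zero]
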